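/- Let F be a field, let c : ℕ → F, let r ≥ 0 and l ≥ 1 be natural numbers such that c_{i+l} = c_i for all i > r, and let Ψ_n denote the product of the matrices [[c_0,1],[1,0]]·[[c_1,1],[1,0]]⋯[[c_n,1],[1,0]]. Then for every natural number k ≥ 1 and every n ≥ r, Tr(Ψ_n⁻¹·Ψ_{n+kl}) = 𝒯^l_k(t_1), where t_1 = Tr(Ψ_r⁻¹·Ψ_{r+l}). -/

import Mathlib

/-!
For `n ≥ r`, periodicity makes passing from `Ψ_n` to `Ψ_{n+l}` a left multiplication by one fixed
matrix `P = Ψ_{r+l}·Ψ_r⁻¹`: both `Ψ_{n+l}` and `P·Ψ_n` are multiplied on the right by the same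
factor when `n` increases (`cfPsi_add_period`). Hence `Ψ_{n+kl} = P^k·Ψ_n`, and `Ψ_n⁻¹·Ψ_{n+kl}` is
conjugate to `P^k`. Since `det P = (-1)^l`, the Cayley–Hamilton identity `P² = (tr P)·P - (det P)·1`
turns `k ↦ tr P^k` into a solution of the recurrence defining `𝒯^l_k`, evaluated at
`tr P = t_1`, with initial values `tr 1 = 2` and `tr P`.
-/

open Polynomial

/-- The elementary continued-fraction matrix `[[a,1],[1,0]]`. -/
def cfMat {F : Type*} [Field F] (a : F) : Matrix (Fin 2) (Fin 2) F := !![a, 1; 1, 0]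

/-- `Ψ_n = [[c_0,1],[1,0]]·[[c_1,1],[1,0]]⋯[[c_n,1],[1,0]]`, the matrix of convergents. -/
def cfPsi {F : Type*} [Field F] (c : ℕ → F) (n : ℕ) : Matrix (Fin 2) (Fin 2) F :=
  ((List.range (n + 1)).map fun i => cfMat (c i)).prod

/-- The dilated Chebyshev polynomials of the first kind:
`𝒯_{k+2} = x·𝒯_{k+1} − 𝒯_k`, `𝒯_0 = 2`, `𝒯_1 = x`. -/
noncomputable def dilChebT (R : Type*) [CommRing R] : ℕ → Polynomial R
  | 0 => 2
  | 1 => X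
  | k + 2 => X * dilChebT R (k + 1) - dilChebT R k

/-- The sign-changed dilated Chebyshev polynomials of the first kind:
`𝒯̄_{k+2} = x·𝒯̄_{k+1} + 𝒯̄_k`, `𝒯̄_0 = 2`, `𝒯̄_1 = x`. -/
noncomputable def dilChebTBar (R : Type*) [CommRing R] : ℕ → Polynomial R
  | 0 => 2
  | 1 => X
  | k + 2 => X * dilChebTBar R (k + 1) + dilChebTBar R k

/-- The signed dilated Chebyshev polynomial of the first kind `𝒯^l_k`:
equals `𝒯_k` when `l` is even and `𝒯̄_k` when `l` is odd. -/
noncomputable def dilChebTSigned (R : Type*) [CommRing R] (l k : ℕ) : Polynomial R :=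
  if Even l then dilChebT R k else dilChebTBar R k

theorem cfPsi_succ {F : Type*} [Field F] (c : ℕ → F) (n : ℕ) :
    cfPsi c (n + 1) = cfPsi c n * cfMat (c (n + 1)) := by
  simp [cfPsi, List.range_succ (n := n + 1)]

theorem cfPsi_det {F : Type*} [Field F] (c : ℕ → F) (n : ℕ) :
    (cfPsi c n).det = (-1) ^ (n + 1) := by
  induction n with
  | zero => simp [cfPsi, cfMat, Matrix.det_fin_two]
  | succ n ih => simp [cfPsi_succ, ih, cfMat, Matrix.det_fin_two, pow_succ]

theorem cfPsi_isUnit_det {F : Type*} [Field F] (c : ℕ → F) (n : ℕ) :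
    IsUnit (cfPsi c n).det := by
  rw [cfPsi_det]
  exact (isUnit_one.neg).pow _

/-- The matrix `Ψ_{r+l}·Ψ_r⁻¹` shifts every `Ψ_n` with `n ≥ r` by one period. -/
theorem cfPsi_add_period {F : Type*} [Field F] (c : ℕ → F) (r l : ℕ)
    (hper : ∀ i, r < i → c (i + l) = c i) (n : ℕ) (hn : r ≤ n) :
    cfPsi c (n + l) = cfPsi c (r + l) * (cfPsi c r)⁻¹ * cfPsi c n := by
  induction n, hn using Nat.le_induction with
  | base => rw [Matrix.nonsing_inv_mul_cancel_right _ _ (cfPsi_isUnit_det c r)]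
  | succ n hn ih =>
    rw [show n + 1 + l = n + l + 1 by ring, cfPsi_succ, cfPsi_succ, ih,
      show n + l + 1 = n + 1 + l by ring, hper (n + 1) (by lia), Matrix.mul_assoc _ (cfPsi c n)]

theorem cfPsi_add_mul_period {F : Type*} [Field F] (c : ℕ → F) (r l : ℕ)
    (hper : ∀ i, r < i → c (i + l) = c i) (k n : ℕ) (hn : r ≤ n) :
    cfPsi c (n + k * l) = (cfPsi c (r + l) * (cfPsi c r)⁻¹) ^ k * cfPsi c n := by
  induction k with
  | zero => simp
  | succ k ih =>
    rw [show n + (k + 1) * l = n + k * l + l by ring,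
      cfPsi_add_period c r l hper _ (by lia), ih, pow_succ', Matrix.mul_assoc _ _ (cfPsi c n)]

theorem trace_pow_add_two {R : Type*} [CommRing R] (P : Matrix (Fin 2) (Fin 2) R) (k : ℕ) :
    (P ^ (k + 2)).trace = P.trace * (P ^ (k + 1)).trace - P.det * (P ^ k).trace := by
  rw [pow_add, pow_succ P k, pow_two]
  generalize P ^ k = Q
  simp only [Matrix.trace_fin_two, Matrix.det_fin_two, Matrix.mul_apply, Fin.sum_univ_two]
  ring

theorem dilChebT_eval_trace {R : Type*} [CommRing R] (P : Matrix (Fin 2) (Fin 2) R)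
    (hP : P.det = 1) (k : ℕ) : (dilChebT R k).eval P.trace = (P ^ k).trace := by
  induction k using Nat.twoStepInduction with
  | zero => simp [dilChebT]
  | one => simp [dilChebT]
  | more k h0 h1 => simp [dilChebT, trace_pow_add_two, hP, h0, h1]

theorem dilChebTBar_eval_trace {R : Type*} [CommRing R] (P : Matrix (Fin 2) (Fin 2) R)
    (hP : P.det = -1) (k : ℕ) : (dilChebTBar R k).eval P.trace = (P ^ k).trace := by
  induction k using Nat.twoStepInduction with
  | zero => simp [dilChebTBar]
  | one => simp [dilChebTBar]
  | more k h0 h1 => simp [dilChebTBar, trace_pow_add_two, hP, h0, h1]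

theorem dilChebTSigned_eval_trace {R : Type*} [CommRing R] (P : Matrix (Fin 2) (Fin 2) R)
    (l : ℕ) (hP : P.det = (-1) ^ l) (k : ℕ) :
    (dilChebTSigned R l k).eval P.trace = (P ^ k).trace := by
  unfold dilChebTSigned
  split_ifs with h
  · exact dilChebT_eval_trace P (hP.trans h.neg_one_pow) k
  · exact dilChebTBar_eval_trace P (hP.trans (Nat.not_even_iff_odd.mp h).neg_one_pow) k

/-- For an eventually periodic sequence of partial quotients (period `l`, run-up `r`),
`Tr(Ψ_n⁻¹·Ψ_{n+kl}) = 𝒯^l_k(t_1)` for `n ≥ r`, `k ≥ 1`, where `t_1 = Tr(Ψ_r⁻¹·Ψ_{r+l})`. -/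
theorem cfPsi_trace_eq_dilChebTSigned {F : Type*} [Field F] (c : ℕ → F) (r l : ℕ)
    (hl : 1 ≤ l) (hper : ∀ i, r < i → c (i + l) = c i) (k : ℕ) (hk : 1 ≤ k)
    (n : ℕ) (hn : r ≤ n) :
    Matrix.trace ((cfPsi c n)⁻¹ * cfPsi c (n + k * l)) =
      (dilChebTSigned F l k).eval (Matrix.trace ((cfPsi c r)⁻¹ * cfPsi c (r + l))) := by
  have hdet : (cfPsi c (r + l) * (cfPsi c r)⁻¹).det = (-1) ^ l := by
    have h := congrArg Matrix.det
      (Matrix.nonsing_inv_mul_cancel_right _ (cfPsi c (r + l)) (cfPsi_isUnit_det c r))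
    rw [Matrix.det_mul, cfPsi_det, cfPsi_det, show r + l + 1 = l + (r + 1) by ring,
      pow_add _ l] at h
    exact mul_right_cancel₀ (pow_ne_zero _ (neg_ne_zero.mpr one_ne_zero)) h
  rw [cfPsi_add_mul_period c r l hper k n hn, Matrix.trace_mul_comm,
    Matrix.mul_nonsing_inv_cancel_right _ _ (cfPsi_isUnit_det c n),
    Matrix.trace_mul_comm (cfPsi c r)⁻¹, dilChebTSigned_eval_trace _ l hdet]
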